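/- Let T ≥ 2, τ ∈ {1,…,T}, z ∈ {1,…,τ−1}, α ∈ [0,1]. Suppose the file F and shares M_1,…,M_T satisfy recoverability and (α,z)-privacy. Then for any V ⊆ {1,…,T} with |V| < z, there exists l ∈ {1,…,T}\V such that H(M_l | M_V) ≥ ((1−α)/(τ−z))·H(F). -/

import Mathlib

/-!
Choose `V ⊆ S ⊆ R` with `|S| = z` and `|R| = τ`. Privacy at `S`, recoverability at `R` and
monotonicity of entropy give
`(1 - α) H(F) ≤ H(F | M_S) = H(F, M_S) - H(M_S) ≤ H(F, M_R) - H(M_S) = H(M_R) - H(M_S)`,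
and the chain rule with "conditioning reduces entropy" bounds the right side by
`∑ H(M_l | M_V)` over the `τ - z` servers `l ∈ R \ S` (`ent_shares_union_le`). One of these terms
is at least the average. The two entropy inequalities used are monotonicity under functions
(`ent_mono`) and submodularity (`ent_submod`).
-/

open scoped BigOperators
open Classical

noncomputable section

/-- Probability of an event `A` under the probability mass function `p` on a finite
sample space `Ω`. -/
def prb {Ω : Type} [Fintype Ω] (p : Ω → ℝ) (A : Set Ω) : ℝ :=
  ∑ ω, if ω ∈ A then p ω else 0

/-- Shannon entropy (in bits, base-2 logarithm) of a random variable `X` defined on a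
finite sample space with probability mass function `p`, with the convention
`0 * log 0 = 0`. -/
def ent {Ω V : Type} [Fintype Ω] [Fintype V] (p : Ω → ℝ) (X : Ω → V) : ℝ :=
  -∑ v, prb p {ω | X ω = v} * Real.logb 2 (prb p {ω | X ω = v})

/-- Conditional Shannon entropy `H(X | Y) = H(X, Y) - H(Y)`. -/
def condEnt {Ω V W : Type} [Fintype Ω] [Fintype V] [Fintype W]
    (p : Ω → ℝ) (X : Ω → V) (Y : Ω → W) : ℝ :=
  ent p (fun ω => (X ω, Y ω)) - ent p Y

/-- Mutual information `I(X ; Y) = H(X) + H(Y) - H(X, Y)`. -/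
def mutInf {Ω V W : Type} [Fintype Ω] [Fintype V] [Fintype W]
    (p : Ω → ℝ) (X : Ω → V) (Y : Ω → W) : ℝ :=
  ent p X + ent p Y - ent p (fun ω => (X ω, Y ω))

/-- The tuple of shares `M_S = (M_t)_{t ∈ S}` viewed as a single random variable. -/
def shares {Ω : Type} {T : ℕ} {χ : Fin T → Type} (M : ∀ t, Ω → χ t)
    (S : Finset (Fin T)) : Ω → (∀ t : S, χ t.1) :=
  fun ω t => M t.1 ω

/-- The mean of `f ∘ X` can be computed on the sample space or from the law of `X`. -/
lemma sum_mul_comp {Ω A : Type} [Fintype Ω] [Fintype A] (p : Ω → ℝ) (X : Ω → A) (f : A → ℝ) :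
    ∑ v, prb p {ω | X ω = v} * f v = ∑ ω, p ω * f (X ω) := by
  simp only [prb, Finset.sum_mul, Set.mem_ofPred_eq, ite_mul, zero_mul]
  rw [Finset.sum_comm]
  simp

/-- Entropy as the mean of the self-information `-log₂ P(X = X ω)` over the sample space. -/
lemma ent_eq {Ω A : Type} [Fintype Ω] [Fintype A] (p : Ω → ℝ) (X : Ω → A) :
    ent p X = -∑ ω, p ω * Real.logb 2 (prb p {ω' | X ω' = X ω}) := by
  rw [ent, sum_mul_comp p X (fun v => Real.logb 2 (prb p {ω | X ω = v}))]

lemma prb_nonneg {Ω : Type} [Fintype Ω] {p : Ω → ℝ} (hp0 : ∀ ω, 0 ≤ p ω) (A : Set Ω) :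
    0 ≤ prb p A :=
  Finset.sum_nonneg fun ω _ => by split_ifs <;> simp [hp0]

lemma prb_mono {Ω : Type} [Fintype Ω] {p : Ω → ℝ} (hp0 : ∀ ω, 0 ≤ p ω) {A B : Set Ω}
    (h : A ⊆ B) : prb p A ≤ prb p B := by
  refine Finset.sum_le_sum fun ω _ => ?_
  by_cases hA : ω ∈ A
  · simp [hA, h hA]
  · by_cases hB : ω ∈ B <;> simp [hA, hB, hp0]

lemma le_prb {Ω : Type} [Fintype Ω] {p : Ω → ℝ} (hp0 : ∀ ω, 0 ≤ p ω) {A : Set Ω} {ω : Ω}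
    (h : ω ∈ A) : p ω ≤ prb p A := by
  have := Finset.single_le_sum (f := fun ω => if ω ∈ A then p ω else 0)
    (fun ω _ => by split_ifs <;> simp [hp0]) (Finset.mem_univ ω)
  simpa [prb, h] using this

lemma sum_prb {Ω A : Type} [Fintype Ω] [Fintype A] (p : Ω → ℝ) (X : Ω → A) :
    ∑ v, prb p {ω | X ω = v} = ∑ ω, p ω := by
  simpa using sum_mul_comp p X (fun _ => 1)

lemma sum_prb_pair {Ω A C : Type} [Fintype Ω] [Fintype A] (p : Ω → ℝ)
    (X : Ω → A) (Z : Ω → C) (c : C) :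
    ∑ a, prb p {ω | (X ω, Z ω) = (a, c)} = prb p {ω | Z ω = c} := by
  simp only [prb, Set.mem_ofPred_eq, Prod.mk.injEq]
  rw [Finset.sum_comm]
  refine Finset.sum_congr rfl fun ω _ => ?_
  by_cases h : Z ω = c <;> simp [h]

/-- Entropy is monotone: if `Y` determines `X`, then `H(X) ≤ H(Y)`. -/
lemma ent_mono {Ω A B : Type} [Fintype Ω] [Fintype A] [Fintype B] {p : Ω → ℝ}
    (hp0 : ∀ ω, 0 ≤ p ω) (X : Ω → A) (Y : Ω → B)
    (h : ∀ ω ω', Y ω = Y ω' → X ω = X ω') : ent p X ≤ ent p Y := by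
  rw [ent_eq, ent_eq, neg_le_neg_iff]
  refine Finset.sum_le_sum fun ω _ => ?_
  rcases (hp0 ω).eq_or_lt with h0 | hpos
  · simp [← h0]
  · refine mul_le_mul_of_nonneg_left ?_ (hp0 ω)
    exact Real.logb_le_logb_of_le one_lt_two (hpos.trans_le (le_prb hp0 (by simp)))
      (prb_mono hp0 fun ω' h' => h ω' ω h')

/-- Submodularity of entropy, i.e. nonnegativity of `I(X ; Y | Z)`. With `ρ` the ratio
`P(x,z) P(y,z) / (P(x,y,z) P(z))`, the inequality `log ρ ≤ ρ - 1` reduces it to `E[ρ] ≤ 1`. -/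
lemma ent_submod {Ω A B C : Type} [Fintype Ω] [Fintype A] [Fintype B] [Fintype C] {p : Ω → ℝ}
    (hp0 : ∀ ω, 0 ≤ p ω) (hp1 : ∑ ω, p ω = 1) (X : Ω → A) (Y : Ω → B) (Z : Ω → C) :
    ent p (fun ω => (X ω, Y ω, Z ω)) + ent p Z ≤
      ent p (fun ω => (X ω, Z ω)) + ent p (fun ω => (Y ω, Z ω)) := by
  set qxz : A × C → ℝ := fun v => prb p {ω | (X ω, Z ω) = v} with hqxz
  set qyz : B × C → ℝ := fun v => prb p {ω | (Y ω, Z ω) = v} with hqyz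
  set qz : C → ℝ := fun v => prb p {ω | Z ω = v} with hqz
  set q : A × B × C → ℝ := fun v => prb p {ω | (X ω, Y ω, Z ω) = v} with hq
  let ρ : A × B × C → ℝ := fun v => qxz (v.1, v.2.2) * qyz v.2 / (q v * qz v.2.2)
  have nxz : ∀ v, 0 ≤ qxz v := fun v => prb_nonneg hp0 _
  have nyz : ∀ v, 0 ≤ qyz v := fun v => prb_nonneg hp0 _
  have nz : ∀ v, 0 ≤ qz v := fun v => prb_nonneg hp0 _
  have nq : ∀ v, 0 ≤ q v := fun v => prb_nonneg hp0 _
  have hmean : ∑ ω, p ω * ρ (X ω, Y ω, Z ω) ≤ 1 := by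
    rw [← sum_mul_comp p (fun ω => (X ω, Y ω, Z ω)) ρ]
    calc ∑ v, q v * ρ v ≤ ∑ v : A × B × C, qxz (v.1, v.2.2) * qyz v.2 / qz v.2.2 := by
          refine Finset.sum_le_sum fun v _ => ?_
          rcases (nq v).eq_or_lt with h0 | hpos
          · rw [← h0, zero_mul]
            exact div_nonneg (mul_nonneg (nxz _) (nyz _)) (nz _)
          · refine le_of_eq ?_
            simp only [ρ]
            rw [← mul_div_assoc, mul_div_mul_left _ _ hpos.ne']
      _ = ∑ c, qz c * qz c / qz c := by
          rw [Fintype.sum_prod_type, Finset.sum_comm, Fintype.sum_prod_type, Finset.sum_comm]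
          refine Finset.sum_congr rfl fun c _ => ?_
          simp only [← Finset.sum_div, ← Finset.sum_mul, ← Finset.mul_sum]
          have ex : ∑ a, qxz (a, c) = qz c := sum_prb_pair p X Z c
          have ey : ∑ b, qyz (b, c) = qz c := sum_prb_pair p Y Z c
          rw [ex, ey]
      _ = ∑ c, qz c := by simp [mul_self_div_self]
      _ = 1 := by rw [hqz, sum_prb, hp1]
  have hlog : ∀ ω, p ω * (Real.logb 2 (qxz (X ω, Z ω)) + Real.logb 2 (qyz (Y ω, Z ω))
      - Real.logb 2 (q (X ω, Y ω, Z ω)) - Real.logb 2 (qz (Z ω))) ≤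
      (p ω * ρ (X ω, Y ω, Z ω) - p ω) / Real.log 2 := by
    intro ω
    rcases (hp0 ω).eq_or_lt with h0 | hpos
    · simp [← h0]
    have pxz : 0 < qxz (X ω, Z ω) := hpos.trans_le (le_prb hp0 (by simp))
    have pyz : 0 < qyz (Y ω, Z ω) := hpos.trans_le (le_prb hp0 (by simp))
    have pz : 0 < qz (Z ω) := hpos.trans_le (le_prb hp0 (by simp))
    have pq : 0 < q (X ω, Y ω, Z ω) := hpos.trans_le (le_prb hp0 (by simp))
    have hl := Real.log_le_sub_one_of_pos (x := ρ (X ω, Y ω, Z ω)) (by positivity)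
    have he : Real.log (ρ (X ω, Y ω, Z ω)) = Real.log (qxz (X ω, Z ω)) + Real.log (qyz (Y ω, Z ω))
        - Real.log (q (X ω, Y ω, Z ω)) - Real.log (qz (Z ω)) := by
      simp only [ρ]
      rw [Real.log_div (by positivity) (by positivity), Real.log_mul pxz.ne' pyz.ne',
        Real.log_mul pq.ne' pz.ne']
      ring
    rw [he] at hl
    have h2 : 0 < Real.log 2 := Real.log_pos one_lt_two
    simp only [Real.logb, ← add_div, ← sub_div, ← mul_div_assoc]
    gcongr
    nlinarith
  have hsum := Finset.sum_le_sum fun ω (_ : ω ∈ Finset.univ) => hlog ω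
  rw [← Finset.sum_div, Finset.sum_sub_distrib, hp1] at hsum
  have hneg : (∑ ω, p ω * ρ (X ω, Y ω, Z ω) - 1) / Real.log 2 ≤ 0 :=
    div_nonpos_of_nonpos_of_nonneg (by linarith) (Real.log_pos one_lt_two).le
  simp only [mul_sub, mul_add, Finset.sum_sub_distrib, Finset.sum_add_distrib] at hsum
  rw [ent_eq, ent_eq p Z, ent_eq p (fun ω => (X ω, Z ω)), ent_eq p (fun ω => (Y ω, Z ω))]
  simp only [hqxz, hqyz, hqz, hq] at hsum hneg
  linarith

lemma shares_eq_of_subset {Ω : Type} {T : ℕ} {χ : Fin T → Type} (M : ∀ t, Ω → χ t)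
    {S R : Finset (Fin T)} (h : S ⊆ R) {ω ω' : Ω} (he : shares M R ω = shares M R ω') :
    shares M S ω = shares M S ω' := by
  funext t
  exact congrFun he ⟨t.1, h t.2⟩

/-- Chain rule together with "conditioning reduces entropy": enlarging `S ⊇ V` by `D` raises the
entropy of the shares by at most the sum of the `H(M_l | M_V)` over `l ∈ D`. -/
lemma ent_shares_union_le {Ω : Type} [Fintype Ω] {p : Ω → ℝ}
    (hp0 : ∀ ω, 0 ≤ p ω) (hp1 : ∑ ω, p ω = 1) {T : ℕ} {χ : Fin T → Type}
    [∀ t, Fintype (χ t)] (M : ∀ t, Ω → χ t) {V S : Finset (Fin T)} (hVS : V ⊆ S)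
    (D : Finset (Fin T)) :
    ent p (shares M (S ∪ D)) ≤
      ent p (shares M S) + ∑ l ∈ D, condEnt p (M l) (shares M V) := by
  induction D using Finset.induction_on with
  | empty =>
    rw [Finset.sum_empty, add_zero]
    exact ent_mono hp0 _ _ fun ω ω' h => shares_eq_of_subset M (by simp) h
  | insert l D hl ih =>
    rw [Finset.sum_insert hl]
    have hsub := ent_submod hp0 hp1 (M l) (shares M (S ∪ D)) (shares M V)
    have h1 : ent p (shares M (S ∪ insert l D)) ≤
        ent p (fun ω => (M l ω, shares M (S ∪ D) ω, shares M V ω)) := by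
      refine ent_mono hp0 _ _ fun ω ω' h => ?_
      simp only [Prod.mk.injEq] at h
      funext t
      obtain ⟨t, ht⟩ := t
      have ht' : t = l ∨ t ∈ S ∪ D := by
        simp only [Finset.mem_union, Finset.mem_insert] at ht ⊢
        tauto
      rcases ht' with rfl | ht'
      · exact h.1
      · exact congrFun h.2.1 ⟨t, ht'⟩
    have h2 : ent p (fun ω => (shares M (S ∪ D) ω, shares M V ω)) ≤ ent p (shares M (S ∪ D)) :=
      ent_mono hp0 _ _ fun ω ω' h => Prod.ext h
        (shares_eq_of_subset M (hVS.trans Finset.subset_union_left) h)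
    unfold condEnt at ih ⊢
    linarith

/-- Under recoverability and `(α, z)`-privacy, for any
`V ⊆ {1, …, T}` with `|V| < z`, there exists a server `l ∉ V` with
`H(M_l | M_V) ≥ ((1 - α) / (τ - z)) · H(F)`. -/
theorem exists_large_cond_share_entropy
    {Ω : Type} [Fintype Ω] (p : Ω → ℝ)
    (hp0 : ∀ ω, 0 ≤ p ω) (hp1 : ∑ ω, p ω = 1)
    {T : ℕ} (hT : 2 ≤ T) {τ z : ℕ} (hτ1 : 1 ≤ τ) (hτT : τ ≤ T)
    (hz1 : 1 ≤ z) (hzτ : z < τ)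
    {α : ℝ} (hα0 : 0 ≤ α) (hα1 : α ≤ 1)
    {𝔽 : Type} [Fintype 𝔽] (F : Ω → 𝔽) (hF : 0 < ent p F)
    {χ : Fin T → Type} [∀ t, Fintype (χ t)] (M : ∀ t, Ω → χ t)
    (hrec : ∀ S : Finset (Fin T), τ ≤ S.card → condEnt p F (shares M S) = 0)
    (hpriv : ∀ S : Finset (Fin T), S.Nonempty → S.card ≤ z →
      mutInf p F (shares M S) ≤ α * ent p F) :
    ∀ V : Finset (Fin T), V.card < z →
      ∃ l : Fin T, l ∉ V ∧
        condEnt p (M l) (shares M V) ≥ ((1 - α) / ((τ : ℝ) - (z : ℝ))) * ent p F := by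
  intro V hV
  -- `V ⊆ S ⊆ R` with `S` as large as privacy allows and `R` just large enough to recover `F`
  obtain ⟨S, hVS, -, hS⟩ := Finset.exists_subsuperset_card_eq (Finset.subset_univ V) hV.le
    (by simp; omega : z ≤ (Finset.univ : Finset (Fin T)).card)
  obtain ⟨R, hSR, -, hR⟩ := Finset.exists_subsuperset_card_eq (Finset.subset_univ S)
    (by omega : S.card ≤ τ) (by simpa using hτT)
  have hrecR := hrec R hR.ge
  have hprivS := hpriv S (Finset.card_pos.mp (by omega)) hS.le
  have hmono : ent p (fun ω => (F ω, shares M S ω)) ≤ ent p (fun ω => (F ω, shares M R ω)) := by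
    refine ent_mono hp0 _ _ fun ω ω' h => ?_
    simp only [Prod.mk.injEq] at h ⊢
    exact ⟨h.1, shares_eq_of_subset M hSR h.2⟩
  have hchain := ent_shares_union_le hp0 hp1 M hVS (R \ S)
  rw [Finset.union_sdiff_of_subset hSR] at hchain
  have hcard : (R \ S).card = τ - z := by rw [Finset.card_sdiff_of_subset hSR, hR, hS]
  have hpos : (0 : ℝ) < (τ : ℝ) - z := sub_pos.mpr (by exact_mod_cast hzτ)
  have hne : (R \ S).Nonempty := Finset.card_pos.mp (by omega)
  have havg : ∑ _l ∈ R \ S, (1 - α) / ((τ : ℝ) - (z : ℝ)) * ent p F ≤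
      ∑ l ∈ R \ S, condEnt p (M l) (shares M V) := by
    rw [Finset.sum_const, hcard, nsmul_eq_mul, Nat.cast_sub hzτ.le, ← mul_assoc,
      mul_div_cancel₀ _ hpos.ne']
    unfold mutInf at hprivS
    unfold condEnt at hrecR
    linarith
  obtain ⟨l, hl, hle⟩ := Finset.exists_le_of_sum_le hne havg
  exact ⟨l, fun h => (Finset.mem_sdiff.mp hl).2 (hVS h), hle⟩

end
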